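/- For any number n of agents with additive utilities over a finite set M of indivisible goods (every agent values every item non-negatively) and with utilities over the cake C = [0,1] given by nonnegative integrable density functions, there exists an allocation {(A_i, C_i)}_{i∈N} of the goods and the cake that is EFM. -/

import Mathlib

open MeasureTheory

/-!
Let every agent's items be rescaled so that one unit of money corresponds to the whole cake. Handing
out maximum weight matchings round by round gives an allocation of the items that is EF1, because
each item left over by a round is worth at most the item just received, and envy-freeable, because
every round is. As no permutation of the bundles increases the welfare, the envy graph has no
positive cycle, and the heaviest walks from each agent define subsidies that remove all envy. A
common amount is subtracted from these subsidies, cutting off at zero, so that exactly one unit of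
money is paid: whoever receives a positive subsidy is still not envied, and whoever receives none is
envied only up to one item.

The money is paid in cake, which all agents agree upon: for finitely many atomless measures there is
a partition into pieces of prescribed relative sizes. A single measure can be halved by the
intermediate value theorem. Halving simultaneously for several measures yields, along binary
expansions, a family of sets that grows at the same speed for all of them. Exchanging one half for
its complement along such families passes through a set that also halves one more measure.
-/

section Cake

open Set Filter Topology

variable {α : Type*}

/-- The `k`-th dyadic approximation of the part of `E` of relative size `t`, obtained by following
`k` binary digits of `t` through iterated halvings of `E`. -/
noncomputable def dyadicPart (half : Set α → Set α) : ℕ → Set α → ℝ → Set α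
  | 0, E, t => if 1 ≤ t then E else ∅
  | k + 1, E, t =>
    if t < 1 / 2 then dyadicPart half k (half E) (2 * t)
    else half E ∪ dyadicPart half k (E \ half E) (2 * t - 1)

theorem dyadicPart_zero (half : Set α → Set α) (k : ℕ) (E : Set α) : dyadicPart half k E 0 = ∅ := by
  induction k generalizing E with
  | zero => simp [dyadicPart]
  | succ k ih => simp [dyadicPart, ih]

variable [MeasurableSpace α]

theorem tendsto_measure_zero_of_absolutelyContinuous {β : Type*} {μ ν : Measure α}
    [SigmaFinite μ] [IsFiniteMeasure ν] (hνμ : ν ≪ μ) {l : Filter β} {s : β → Set α}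
    (hs : Tendsto (fun b ↦ μ (s b)) l (𝓝 0)) : Tendsto (fun b ↦ ν (s b)) l (𝓝 0) := by
  simpa only [Measure.setLIntegral_rnDeriv hνμ] using
    tendsto_setLIntegral_zero (Measure.lintegral_rnDeriv_lt_top ν μ).ne hs

/-- A simultaneous halving rule: `half` cuts from every measurable set a measurable subset which
has half of the measure for all `μ ∈ 𝓜`. -/
structure IsHalving (𝓜 : Set (Measure α)) (half : Set α → Set α) : Prop where
  measurableSet {E : Set α} : MeasurableSet E → MeasurableSet (half E)
  subset {E : Set α} : MeasurableSet E → half E ⊆ E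
  measureReal {E : Set α} : MeasurableSet E → ∀ μ ∈ 𝓜, μ.real (half E) = μ.real E / 2

theorem IsHalving.mono {𝓜 𝓜' : Set (Measure α)} {half : Set α → Set α} (h : IsHalving 𝓜 half)
    (hsub : 𝓜' ⊆ 𝓜) : IsHalving 𝓜' half :=
  ⟨h.measurableSet, h.subset, fun hE μ hμ ↦ h.measureReal hE μ (hsub hμ)⟩

theorem exists_isHalving {𝓜 : Set (Measure α)}
    (h : ∀ E, MeasurableSet E →
      ∃ S ⊆ E, MeasurableSet S ∧ ∀ μ ∈ 𝓜, μ.real S = μ.real E / 2) :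
    ∃ half, IsHalving 𝓜 half := by
  choose! half hsub hmeas hreal using h
  exact ⟨half, @hmeas, @hsub, @hreal⟩

namespace IsHalving

variable {𝓜 : Set (Measure α)} {half : Set α → Set α} {E : Set α} {s t : ℝ}

theorem measurableSet_sdiff_half (h : IsHalving 𝓜 half) (hE : MeasurableSet E) :
    MeasurableSet (E \ half E) :=
  hE.diff (h.measurableSet hE)

theorem measurableSet_dyadicPart (h : IsHalving 𝓜 half) (k : ℕ) (hE : MeasurableSet E) (t : ℝ) :
    MeasurableSet (dyadicPart half k E t) := by
  induction k generalizing E t with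
  | zero => unfold dyadicPart; split_ifs <;> simp [hE]
  | succ k ih =>
    unfold dyadicPart
    split_ifs
    · exact ih (h.measurableSet hE) _
    · exact (h.measurableSet hE).union (ih (h.measurableSet_sdiff_half hE) _)

theorem dyadicPart_subset (h : IsHalving 𝓜 half) (k : ℕ) (hE : MeasurableSet E) (t : ℝ) :
    dyadicPart half k E t ⊆ E := by
  induction k generalizing E t with
  | zero => unfold dyadicPart; split_ifs <;> simp
  | succ k ih =>
    unfold dyadicPart
    split_ifs
    · exact (ih (h.measurableSet hE) _).trans (h.subset hE)
    · exact union_subset (h.subset hE) ((ih (h.measurableSet_sdiff_half hE) _).trans sdiff_subset)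

theorem dyadicPart_eq_self (h : IsHalving 𝓜 half) (k : ℕ) (hE : MeasurableSet E) (ht : 1 ≤ t) :
    dyadicPart half k E t = E := by
  induction k generalizing E t with
  | zero => simp [dyadicPart, ht]
  | succ k ih =>
    rw [dyadicPart, if_neg (by linarith), ih (h.measurableSet_sdiff_half hE) (by linarith),
      union_sdiff_cancel (h.subset hE)]

theorem dyadicPart_mono (h : IsHalving 𝓜 half) (k : ℕ) (hE : MeasurableSet E) :
    Monotone (dyadicPart half k E) := by
  intro s t hst
  induction k generalizing E s t with
  | zero =>
    unfold dyadicPart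
    split_ifs
    · exact subset_rfl
    · linarith
    all_goals exact empty_subset _
  | succ k ih =>
    unfold dyadicPart
    split_ifs
    · exact ih (h.measurableSet hE) (by linarith)
    · exact (h.dyadicPart_subset k (h.measurableSet hE) _).trans subset_union_left
    · linarith
    · exact union_subset_union_right _ (ih (h.measurableSet_sdiff_half hE) (by linarith))

theorem dyadicPart_subset_succ (h : IsHalving 𝓜 half) (k : ℕ) (hE : MeasurableSet E) (t : ℝ) :
    dyadicPart half k E t ⊆ dyadicPart half (k + 1) E t := by
  induction k generalizing E t with
  | zero =>
    rcases le_or_gt 1 t with ht | ht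
    · rw [h.dyadicPart_eq_self _ hE ht, h.dyadicPart_eq_self _ hE ht]
    · simp [dyadicPart, ht.not_ge]
  | succ k ih =>
    rw [dyadicPart.eq_def half (k + 1), dyadicPart.eq_def half (k + 2)]
    dsimp only
    split_ifs
    · exact ih (h.measurableSet hE) _
    · exact union_subset_union_right _ (ih (h.measurableSet_sdiff_half hE) _)

theorem measureReal_sdiff_half (h : IsHalving 𝓜 half) (hE : MeasurableSet E) {μ : Measure α}
    [IsFiniteMeasure μ] (hμ : μ ∈ 𝓜) : μ.real (E \ half E) = μ.real E / 2 := by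
  rw [measureReal_sdiff (h.subset hE) (h.measurableSet hE), h.measureReal hE μ hμ, sub_half]

theorem measureReal_dyadicPart (h : IsHalving 𝓜 half) (k : ℕ) (hE : MeasurableSet E)
    {μ : Measure α} [IsFiniteMeasure μ] (hμ : μ ∈ 𝓜) (ht : t ∈ Icc 0 1) :
    μ.real (dyadicPart half k E t) = ⌊t * 2 ^ k⌋₊ / 2 ^ k * μ.real E := by
  induction k generalizing E t with
  | zero =>
    rcases ht.2.eq_or_lt with rfl | ht1
    · simp [dyadicPart]
    · simp [dyadicPart, ht1.not_ge, Nat.floor_eq_zero.2 ht1]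
  | succ k ih =>
    rw [dyadicPart]
    split_ifs with hlt
    · rw [ih (h.measurableSet hE) ⟨by linarith [ht.1], by linarith⟩, h.measureReal hE μ hμ,
        show 2 * t * 2 ^ k = t * 2 ^ (k + 1) by ring]
      ring
    · have hdisj : Disjoint (half E) (dyadicPart half k (E \ half E) (2 * t - 1)) :=
        disjoint_sdiff_right.mono_right (h.dyadicPart_subset k (h.measurableSet_sdiff_half hE) _)
      have hfloor : ⌊t * 2 ^ (k + 1)⌋₊ = ⌊(2 * t - 1) * 2 ^ k⌋₊ + 2 ^ k := by
        rw [← Nat.floor_add_natCast (mul_nonneg (by linarith) (by positivity))]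
        congr 1
        push_cast
        ring
      rw [measureReal_union hdisj (h.measurableSet_dyadicPart k (h.measurableSet_sdiff_half hE) _),
        ih (h.measurableSet_sdiff_half hE) ⟨by linarith, by linarith [ht.2]⟩, h.measureReal hE μ hμ,
        h.measureReal_sdiff_half hE hμ, hfloor]
      push_cast
      field_simp
      ring

end IsHalving

/-- A nested family of measurable sets growing from `∅` to `E`, at the same unit speed for all
measures in `𝓜`. -/
structure IsUniformSweep (𝓜 : Set (Measure α)) (E : Set α) (P : ℝ → Set α) : Prop where
  mono : Monotone P
  measurableSet : ∀ t, MeasurableSet (P t)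
  zero : P 0 = ∅
  one : P 1 = E
  measureReal : ∀ μ ∈ 𝓜, ∀ t ∈ Icc (0 : ℝ) 1, μ.real (P t) = t * μ.real E



theorem IsHalving.tendsto_measureReal_dyadicPart {𝓜 : Set (Measure α)} {half : Set α → Set α}
    {E : Set α} {t : ℝ} (h : IsHalving 𝓜 half) (hE : MeasurableSet E) {μ : Measure α}
    [IsFiniteMeasure μ] (hμ : μ ∈ 𝓜) (ht : t ∈ Icc 0 1) :
    Tendsto (fun k ↦ μ.real (dyadicPart half k E t)) atTop (𝓝 (t * μ.real E)) := by
  have hfloor : Tendsto (fun k : ℕ ↦ (⌊t * 2 ^ k⌋₊ : ℝ) / 2 ^ k) atTop (𝓝 t) :=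
    (tendsto_nat_floor_mul_div_atTop ht.1).comp (tendsto_pow_atTop_atTop_of_one_lt one_lt_two)
  simpa only [h.measureReal_dyadicPart _ hE hμ ht] using hfloor.mul_const _

theorem IsHalving.exists_isUniformSweep {𝓜 : Set (Measure α)} {half : Set α → Set α} {E : Set α}
    (h : IsHalving 𝓜 half) (hfin : ∀ μ ∈ 𝓜, IsFiniteMeasure μ) (hE : MeasurableSet E) :
    ∃ P, IsUniformSweep 𝓜 E P := by
  refine ⟨fun t ↦ ⋃ k, dyadicPart half k E t, ?_, ?_, ?_, ?_, ?_⟩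
  · exact fun _ _ hst ↦ iUnion_mono fun k ↦ h.dyadicPart_mono k hE hst
  · exact fun t ↦ MeasurableSet.iUnion fun k ↦ h.measurableSet_dyadicPart k hE t
  · simp [dyadicPart_zero]
  · simp [h.dyadicPart_eq_self _ hE le_rfl, iUnion_const]
  · intro μ hμ t ht
    have := hfin μ hμ
    have hmono : Monotone fun k ↦ dyadicPart half k E t :=
      monotone_nat_of_le_succ fun k ↦ h.dyadicPart_subset_succ k hE t
    exact tendsto_nhds_unique ((ENNReal.tendsto_toReal (measure_ne_top μ _)).comp
      (tendsto_measure_iUnion_atTop hmono)) (h.tendsto_measureReal_dyadicPart hE hμ ht)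

namespace IsUniformSweep

variable {𝓜 : Set (Measure α)} {E : Set α} {P : ℝ → Set α} {μ ν : Measure α} {s t : ℝ}

theorem subset (h : IsUniformSweep 𝓜 E P) (ht : t ≤ 1) : P t ⊆ E :=
  (h.mono ht).trans_eq h.one

theorem abs_measureReal_sub [IsFiniteMeasure ν] (h : IsUniformSweep 𝓜 E P) (s t : ℝ) :
    |ν.real (P s) - ν.real (P t)| = ν.real (P (max s t) \ P (min s t)) := by
  wlog hst : t ≤ s generalizing s t
  · rw [abs_sub_comm, max_comm, min_comm]
    exact this t s (le_of_not_ge hst)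
  rw [max_eq_left hst, min_eq_right hst, measureReal_sdiff (h.mono hst) (h.measurableSet t),
    abs_of_nonneg (sub_nonneg.2 (measureReal_mono (h.mono hst)))]

theorem tendsto_measure_sdiff [IsFiniteMeasure μ] (h : IsUniformSweep 𝓜 E P) (hμ : μ ∈ 𝓜)
    (ht : t ∈ Icc (0 : ℝ) 1) :
    Tendsto (fun s ↦ μ (P (max s t) \ P (min s t))) (𝓝[Icc 0 1] t) (𝓝 0) := by
  rw [← ENNReal.tendsto_toReal_zero_iff fun s ↦ measure_ne_top μ _]
  have hlin : Tendsto (fun s ↦ |s * μ.real E - t * μ.real E|) (𝓝[Icc 0 1] t) (𝓝 0) := by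
    refine tendsto_nhdsWithin_of_tendsto_nhds ?_
    exact (Continuous.tendsto' (by fun_prop) t 0 (by simp))
  refine hlin.congr' (eventually_mem_nhdsWithin.mono fun s hs ↦ ?_)
  rw [← h.measureReal μ hμ s hs, ← h.measureReal μ hμ t ht, h.abs_measureReal_sub, measureReal_def]

theorem continuousOn_measureReal [IsFiniteMeasure μ] [IsFiniteMeasure ν]
    (h : IsUniformSweep 𝓜 E P) (hμ : μ ∈ 𝓜) (hν : ν ≪ μ) :
    ContinuousOn (fun t ↦ ν.real (P t)) (Icc 0 1) := by
  intro t ht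
  rw [ContinuousWithinAt, tendsto_iff_dist_tendsto_zero]
  simp only [Real.dist_eq, h.abs_measureReal_sub]
  exact (ENNReal.tendsto_toReal_zero_iff fun s ↦ measure_ne_top ν _).2
    (tendsto_measure_zero_of_absolutelyContinuous hν (h.tendsto_measure_sdiff hμ ht))

end IsUniformSweep

theorem measureReal_sdiff_union {S P Q E : Set α} {μ : Measure α} [IsFiniteMeasure μ]
    (hP : MeasurableSet P) (hQ : MeasurableSet Q) (hPS : P ⊆ S) (hQE : Q ⊆ E \ S) :
    μ.real (S \ P ∪ Q) = μ.real S - μ.real P + μ.real Q := by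
  have hdisj : Disjoint (S \ P) Q := (disjoint_sdiff_right.mono_right hQE).mono_left sdiff_subset
  rw [measureReal_union hdisj hQ, measureReal_sdiff hPS hP]

/- While the half `S` is exchanged for its complement at unit speed, all measures in `𝓜` keep their
value and `ν` passes through the average of `ν S` and `ν (E \ S)`. -/
theorem IsHalving.exists_insert {𝓜 : Set (Measure α)} {half : Set α → Set α} {μ ν : Measure α}
    [IsFiniteMeasure ν] (h : IsHalving 𝓜 half) (hfin : ∀ μ ∈ 𝓜, IsFiniteMeasure μ) (hμ : μ ∈ 𝓜)
    (hν : ν ≪ μ) : ∃ half', IsHalving (insert ν 𝓜) half' := by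
  refine exists_isHalving fun E hE ↦ ?_
  set S := half E with hS
  have hSE : S ⊆ E := h.subset hE
  obtain ⟨P, hP⟩ := h.exists_isUniformSweep hfin (h.measurableSet hE)
  obtain ⟨Q, hQ⟩ := h.exists_isUniformSweep hfin (h.measurableSet_sdiff_half hE)
  have hreal {ξ : Measure α} [IsFiniteMeasure ξ] {t : ℝ} (ht : t ∈ Icc (0 : ℝ) 1) :
      ξ.real (S \ P t ∪ Q t) = ξ.real S - ξ.real (P t) + ξ.real (Q t) :=
    measureReal_sdiff_union (hP.measurableSet t) (hQ.measurableSet t) (hP.subset ht.2)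
      (hQ.subset ht.2)
  have := hfin μ hμ
  have hcont : ContinuousOn (fun t ↦ ν.real S - ν.real (P t) + ν.real (Q t)) (uIcc 0 1) := by
    rw [uIcc_of_le zero_le_one]
    exact (continuousOn_const.sub (hP.continuousOn_measureReal hμ hν)).add
      (hQ.continuousOn_measureReal hμ hν)
  obtain ⟨t, ht, hνt⟩ : ∃ t ∈ Icc (0 : ℝ) 1,
      ν.real S - ν.real (P t) + ν.real (Q t) = ν.real E / 2 := by
    rw [← uIcc_of_le (zero_le_one (α := ℝ))]
    refine intermediate_value_uIcc hcont ?_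
    have hE' := measureReal_sdiff (μ := ν) hSE (h.measurableSet hE)
    simp only [hP.zero, hP.one, hQ.zero, hQ.one, measureReal_empty, hE', mem_uIcc, ← hS]
    grind
  refine ⟨S \ P t ∪ Q t, union_subset (sdiff_subset.trans hSE)
    ((hQ.subset ht.2).trans sdiff_subset),
    ((h.measurableSet hE).diff (hP.measurableSet t)).union (hQ.measurableSet t), ?_⟩
  rintro ξ (rfl | hξ)
  · rw [hreal ht, hνt]
  · have := hfin ξ hξ
    rw [hreal ht, hP.measureReal ξ hξ t ht, hQ.measureReal ξ hξ t ht, h.measureReal hE ξ hξ,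
      h.measureReal_sdiff_half hE hξ]
    ring

theorem IsHalving.exists_of_finite {m : Measure α} [IsFiniteMeasure m] {half : Set α → Set α}
    (h : IsHalving {m} half) {𝓜 : Set (Measure α)} (hfinite : 𝓜.Finite)
    (hfin : ∀ μ ∈ 𝓜, IsFiniteMeasure μ) (hm : ∀ μ ∈ 𝓜, μ ≪ m) :
    ∃ half', IsHalving (insert m 𝓜) half' := by
  induction 𝓜, hfinite using Set.Finite.induction_on with
  | empty => exact ⟨half, by simpa using h⟩
  | @insert ν 𝓜 _ _ ih =>
    rw [forall_mem_insert] at hfin hm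
    have := hfin.1
    obtain ⟨half', h'⟩ := ih hfin.2 hm.2
    rw [insert_comm]
    exact h'.exists_insert (forall_mem_insert.2 ⟨inferInstance, hfin.2⟩) (mem_insert m 𝓜) hm.1

theorem continuous_measureReal_Iic (μ : Measure ℝ) [IsFiniteMeasure μ] [NullSingletonClass μ] :
    Continuous fun t ↦ μ.real (Iic t) := by
  refine continuous_iff_continuousAt.2 fun t ↦ ?_
  have h : ContinuousOn (fun b ↦ ∫ _ in Iic b, (1 : ℝ) ∂μ) (Iic (t + 1)) :=
    (integrable_const 1).integrableOn.continuousOn_Iic_primitive_Iic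
  simpa using h.continuousAt (Iic_mem_nhds (lt_add_one t))

theorem tendsto_measureReal_Iic_atBot (μ : Measure ℝ) [IsFiniteMeasure μ] :
    Tendsto (fun t ↦ μ.real (Iic t)) atBot (𝓝 0) := by
  have h := tendsto_measure_iInter_atBot (μ := μ) (fun t : ℝ ↦ nullMeasurableSet_Iic)
    monotone_Iic ⟨0, measure_ne_top μ _⟩
  rw [iInter_Iic_eq_empty_iff.2 (by simp), measure_empty] at h
  exact (ENNReal.tendsto_toReal_zero_iff fun t ↦ measure_ne_top μ _).2 h

theorem tendsto_measureReal_Iic_atTop (μ : Measure ℝ) [IsFiniteMeasure μ] :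
    Tendsto (fun t ↦ μ.real (Iic t)) atTop (𝓝 (μ.real univ)) :=
  (ENNReal.tendsto_toReal (measure_ne_top μ _)).comp (tendsto_measure_Iic_atTop μ)

theorem exists_measureReal_Iic_eq {μ : Measure ℝ} [IsFiniteMeasure μ] [NullSingletonClass μ]
    {c : ℝ} (h0 : 0 < c) (hc : c < μ.real univ) : ∃ t, μ.real (Iic t) = c := by
  obtain ⟨a, ha⟩ := ((tendsto_measureReal_Iic_atBot μ).eventually_lt_const h0).exists
  obtain ⟨b, hb⟩ := ((tendsto_measureReal_Iic_atTop μ).eventually_const_lt hc).exists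
  exact mem_range_of_exists_le_of_exists_ge (continuous_measureReal_Iic μ) ⟨a, ha.le⟩ ⟨b, hb.le⟩

theorem nullSingletonClass_map_of_injective {β : Type*} [MeasurableSpace β]
    [MeasurableSingletonClass β] {μ : Measure α} [NullSingletonClass μ] {φ : α → β}
    (hφ : Measurable φ) (hinj : Function.Injective φ) : NullSingletonClass (μ.map φ) where
  measure_singleton x := by
    rw [Measure.map_apply hφ (measurableSet_singleton x)]
    exact (subsingleton_singleton.preimage hinj).measure_zero μ

theorem exists_isHalving_singleton [StandardBorelSpace α] (m : Measure α) [IsFiniteMeasure m]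
    [NullSingletonClass m] : ∃ half, IsHalving {m} half := by
  refine exists_isHalving fun E hE ↦ ?_
  simp only [forall_eq, mem_singleton_iff]
  rcases (measureReal_nonneg (μ := m) (s := E)).eq_or_lt with h0 | hpos
  · exact ⟨∅, empty_subset E, .empty, by simp [← h0]⟩
  obtain ⟨φ, hφ⟩ := exists_measurableEmbedding_real α
  have := nullSingletonClass_map_of_injective (μ := m.restrict E) hφ.measurable hφ.injective
  have huniv : ((m.restrict E).map φ).real univ = m.real E := by
    simp [map_measureReal_apply hφ.measurable]
  obtain ⟨t, ht⟩ := exists_measureReal_Iic_eq (μ := (m.restrict E).map φ) (half_pos hpos)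
    (by rw [huniv]; exact half_lt_self hpos)
  have hmeas : MeasurableSet (φ ⁻¹' Iic t) := hφ.measurable measurableSet_Iic
  rw [map_measureReal_apply hφ.measurable measurableSet_Iic, measureReal_restrict_apply hmeas] at ht
  exact ⟨φ ⁻¹' Iic t ∩ E, inter_subset_right, hmeas.inter hE, ht⟩

theorem exists_isHalving_range [StandardBorelSpace α] {ι : Type*} [Finite ι] (μ : ι → Measure α)
    [∀ i, IsFiniteMeasure (μ i)] [∀ i, NullSingletonClass (μ i)] :
    ∃ half, IsHalving (range μ) half := by
  have := Fintype.ofFinite ι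
  set m := ∑ i, μ i with hm
  have : NullSingletonClass m := ⟨fun x ↦ by simp [hm, Measure.finsetSum_apply]⟩
  have hle (i : ι) : μ i ≤ m :=
    Finset.single_le_sum (fun _ _ ↦ Measure.zero_le _) (Finset.mem_univ i)
  obtain ⟨half, h⟩ := exists_isHalving_singleton m
  obtain ⟨half', h'⟩ := h.exists_of_finite (finite_range μ) (forall_mem_range.2 inferInstance)
    (forall_mem_range.2 fun i ↦ Measure.absolutelyContinuous_of_le (hle i))
  exact ⟨half', h'.mono (subset_insert _ _)⟩

theorem IsUniformSweep.exists_partition {𝓜 : Set (Measure α)} {E : Set α} {P : ℝ → Set α}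
    (h : IsUniformSweep 𝓜 E P) (hfin : ∀ μ ∈ 𝓜, IsFiniteMeasure μ) {ι : Type*} {p : ι → ℝ}
    (hp : ∀ i, 0 ≤ p i) (s : Finset ι) (hs : ∑ i ∈ s, p i ≤ 1) :
    ∃ C : ι → Set α, (∀ i, MeasurableSet (C i)) ∧ (s : Set ι).PairwiseDisjoint C ∧
      ⋃ i ∈ s, C i = P (∑ i ∈ s, p i) ∧ ∀ i ∈ s, ∀ μ ∈ 𝓜, μ.real (C i) = p i * μ.real E := by
  classical
  induction s using Finset.induction_on with
  | empty => exact ⟨fun _ ↦ ∅, by simp [h.zero]⟩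
  | insert a s ha ih =>
    rw [Finset.sum_insert ha, add_comm] at hs ⊢
    have hσ : 0 ≤ ∑ i ∈ s, p i := Finset.sum_nonneg fun i _ ↦ hp i
    have hsub : P (∑ i ∈ s, p i) ⊆ P (∑ i ∈ s, p i + p a) := h.mono (by linarith [hp a])
    obtain ⟨C, hmeas, hdisj, hunion, hreal⟩ := ih (by linarith [hp a])
    set D := P (∑ i ∈ s, p i + p a) \ P (∑ i ∈ s, p i) with hD
    have hC {i : ι} (hi : i ∈ s) : Function.update C a D i = C i :=
      Function.update_of_ne (ne_of_mem_of_not_mem hi ha) D C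
    refine ⟨Function.update C a D, ?_, ?_, ?_, ?_⟩
    · exact (Function.forall_update_iff C fun _ ↦ MeasurableSet).2
        ⟨(h.measurableSet _).diff (h.measurableSet _), fun i _ ↦ hmeas i⟩
    · rw [Finset.coe_insert, pairwiseDisjoint_insert_of_notMem (by simpa using ha)]
      refine ⟨fun i hi j hj hij ↦ ?_, fun i hi ↦ ?_⟩
      · simpa [Function.onFun, hC hi, hC hj] using hdisj hi hj hij
      · rw [Function.update_self, hC hi]
        refine disjoint_sdiff_left.mono_right ?_
        rw [← hunion]
        exact subset_biUnion_of_mem (u := C) hi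
    · rw [Finset.set_biUnion_insert_update _ ha, hunion, sdiff_union_of_subset hsub]
    · rw [Finset.forall_mem_insert]
      refine ⟨fun μ hμ ↦ ?_, fun i hi ↦ by rw [hC hi]; exact hreal i hi⟩
      have := hfin μ hμ
      rw [Function.update_self, hD, measureReal_sdiff hsub (h.measurableSet _),
        h.measureReal μ hμ _ ⟨by linarith [hp a], hs⟩,
        h.measureReal μ hμ _ ⟨hσ, by linarith [hp a]⟩]
      ring

theorem exists_proportional_partition [StandardBorelSpace α] {ι κ : Type*} [Finite ι] [Fintype κ]
    (μ : ι → Measure α) [∀ i, IsFiniteMeasure (μ i)] [∀ i, NullSingletonClass (μ i)] {E : Set α}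
    (hE : MeasurableSet E) {p : κ → ℝ} (hp : ∀ j, 0 ≤ p j) (hsum : ∑ j, p j = 1) :
    ∃ C : κ → Set α, (∀ j, MeasurableSet (C j)) ∧ Pairwise (Function.onFun Disjoint C) ∧
      ⋃ j, C j = E ∧ ∀ i j, (μ i).real (C j) = p j * (μ i).real E := by
  have hfin : ∀ ν ∈ range μ, IsFiniteMeasure ν := forall_mem_range.2 inferInstance
  obtain ⟨half, hhalf⟩ := exists_isHalving_range μ
  obtain ⟨P, hP⟩ := hhalf.exists_isUniformSweep hfin hE
  obtain ⟨C, hmeas, hdisj, hunion, hreal⟩ := hP.exists_partition hfin hp Finset.univ hsum.le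
  refine ⟨C, hmeas, ?_, ?_, fun i j ↦ hreal j (Finset.mem_univ j) _ (mem_range_self i)⟩
  · simpa [PairwiseDisjoint, pairwise_univ] using hdisj
  · simpa [hsum, hP.one] using hunion

end Cake

section Potential

variable {ι M : Type*} [AddCommMonoid M]

/-- The total weight of the walk that starts at `i` and then visits the entries of a list in
order, when the step from `i` to `j` has weight `w i j`. -/
def walkWeight (w : ι → ι → M) : ι → List ι → M
  | _, [] => 0
  | i, j :: l => w i j + walkWeight w j l

theorem walkWeight_append_cons (w : ι → ι → M) (i k : ι) (l₁ l₂ : List ι) :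
    walkWeight w i (l₁ ++ k :: l₂) = walkWeight w i (l₁ ++ [k]) + walkWeight w k l₂ := by
  induction l₁ generalizing i with
  | nil => simp [walkWeight]
  | cons a l ih => simp only [List.cons_append, walkWeight, ih a, add_assoc]

theorem walkWeight_concat (w : ι → ι → M) (i k : ι) (l : List ι) :
    walkWeight w i (l ++ [k]) = (List.zipWith w (i :: l) (l ++ [k])).sum := by
  induction l generalizing i with
  | nil => simp [walkWeight]
  | cons a l ih =>
    simp only [List.cons_append, walkWeight, ih a, List.zipWith_cons_cons, List.sum_cons]

theorem walkWeight_cycle_eq_sum_formPerm [Fintype ι] [DecidableEq ι] {w : ι → ι → M}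
    (h0 : ∀ i, w i i = 0) {i : ι} {l : List ι} (hl : (i :: l).Nodup) :
    walkWeight w i (l ++ [i]) = ∑ x, w x ((i :: l).formPerm x) := by
  have hsupport : ∑ x ∈ (i :: l).toFinset, w x ((i :: l).formPerm x) =
      ∑ x, w x ((i :: l).formPerm x) :=
    Finset.sum_subset (Finset.subset_univ _) fun x _ hx ↦ by
      rw [List.formPerm_apply_of_notMem (by simpa using hx), h0]
  rw [← hsupport, List.sum_toFinset _ hl, walkWeight_concat]
  congr 1
  refine List.ext_getElem (by simp) fun k _ hk ↦ ?_
  rw [List.getElem_zipWith, List.getElem_map, List.formPerm_apply_getElem _ hl,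
    ← List.getElem_rotate (i :: l) 1 k (by simpa using hk)]
  simp

variable [LinearOrder M]

theorem exists_max_walkWeight [Finite ι] (w : ι → ι → M) (i : ι) :
    ∃ l : List ι, (i :: l).Nodup ∧
      ∀ l', (i :: l').Nodup → walkWeight w i l' ≤ walkWeight w i l := by
  have := Fintype.ofFinite ι
  have hfin : {l : List ι | (i :: l).Nodup}.Finite :=
    (List.finite_length_le ι (Fintype.card ι)).subset fun _ hl ↦ hl.of_cons.length_le_card
  exact Set.exists_max_image _ (walkWeight w i) hfin ⟨[], List.nodup_singleton i⟩

variable [IsOrderedAddMonoid M]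

/- `q i` is the largest weight of a simple walk from `i`. Prefixing such a walk from `j` with `i`
gives a simple walk, except if it already visits `i`; then the resulting cycle may be cut off. -/
theorem exists_potential [Finite ι] {w : ι → ι → M} (h0 : ∀ i, w i i = 0)
    (hcycle : ∀ i l, (i :: l).Nodup → walkWeight w i (l ++ [i]) ≤ 0) :
    ∃ q : ι → M, ∀ i j, w i j + q j ≤ q i := by
  choose l hnodup hmax using exists_max_walkWeight w
  refine ⟨fun i ↦ walkWeight w i (l i), fun i j ↦ ?_⟩
  rcases eq_or_ne i j with rfl | hij
  · simp [h0]
  by_cases hi : i ∈ l j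
  · obtain ⟨l₁, l₂, hl⟩ := List.append_of_mem hi
    have hsplit : ((j :: l₁) ++ (i :: l₂)).Nodup := by simpa [← hl] using hnodup j
    obtain ⟨hnd₁, hnd₂, hdisj⟩ := List.nodup_append.1 hsplit
    have hclosed : w i j + walkWeight w j (l₁ ++ [i]) ≤ 0 :=
      hcycle i (j :: l₁) (List.nodup_cons.2 ⟨fun h ↦ hdisj i h i List.mem_cons_self rfl, hnd₁⟩)
    dsimp only
    rw [hl, walkWeight_append_cons, ← add_assoc]
    exact add_le_of_nonpos_of_le hclosed (hmax i l₂ hnd₂)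
  · exact hmax i (j :: l j) (List.nodup_cons.2 ⟨by simp [hij, hi], hnodup j⟩)

theorem exists_potential_of_sum_perm_nonpos [Fintype ι] {w : ι → ι → M} (h0 : ∀ i, w i i = 0)
    (hperm : ∀ σ : Equiv.Perm ι, ∑ i, w i (σ i) ≤ 0) : ∃ q : ι → M, ∀ i j, w i j + q j ≤ q i := by
  classical
  exact exists_potential h0 fun i l hl ↦
    (walkWeight_cycle_eq_sum_formPerm h0 hl).trans_le (hperm (i :: l).formPerm)

end Potential

section Items

variable {ι I : Type*} {v : ι → I → ℝ}

/-- Total utility of the agents when agent `i`, with item utilities `v i`, receives the bundle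
`A i`. -/
def welfare [Fintype ι] (v : ι → I → ℝ) (A : ι → Finset I) : ℝ :=
  ∑ i, ∑ t ∈ A i, v i t

/-- Permuting the bundles of `A` among the agents never increases the welfare: this makes it
possible to remove all envy by paying subsidies. -/
def IsEnvyFreeable [Fintype ι] (v : ι → I → ℝ) (A : ι → Finset I) : Prop :=
  ∀ σ : Equiv.Perm ι, welfare v (A ∘ σ) ≤ welfare v A

variable {R : Finset I} {A B : ι → Finset I}

/-- A matching of agents with items from `R`; the bundle `B i` is the item of agent `i`, if any. -/
structure IsPartialMatching (R : Finset I) (B : ι → Finset I) : Prop where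
  disjoint : Pairwise (Function.onFun Disjoint B)
  subset : ∀ i, B i ⊆ R
  card_le_one : ∀ i, (B i).card ≤ 1

namespace IsPartialMatching

theorem comp_perm (h : IsPartialMatching R B) (σ : Equiv.Perm ι) : IsPartialMatching R (B ∘ σ) :=
  ⟨fun _ _ hij ↦ h.disjoint (σ.injective.ne hij), fun i ↦ h.subset (σ i),
    fun i ↦ h.card_le_one (σ i)⟩

theorem finite_setOf [Finite ι] (R : Finset I) :
    {B : ι → Finset I | IsPartialMatching R B}.Finite :=
  (Set.Finite.pi' fun _ ↦ R.powerset.finite_toSet).subset fun _ hB i ↦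
    Finset.mem_coe.2 (Finset.mem_powerset.2 (hB.subset i))

theorem exists_isMaxOn_welfare [Fintype ι] (v : ι → I → ℝ) (R : Finset I) :
    ∃ B, IsPartialMatching R B ∧ IsMaxOn (welfare v) {B | IsPartialMatching R B} B :=
  Set.exists_max_image _ (welfare v) (finite_setOf R)
    ⟨fun _ ↦ ∅, by constructor <;> simp [Pairwise]⟩

variable [Fintype ι] [DecidableEq I]

theorem update [DecidableEq ι] (h : IsPartialMatching R B) {T : Finset I}
    (hT : T ⊆ R \ Finset.univ.biUnion B) (hcard : T.card ≤ 1) (i : ι) :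
    IsPartialMatching R (Function.update B i T) where
  disjoint j k hjk := by
    have hdisj (l : ι) : Disjoint T (B l) :=
      (Finset.subset_sdiff.1 hT).2.mono_right (Finset.subset_biUnion_of_mem B (Finset.mem_univ l))
    rcases eq_or_ne j i with rfl | hj
    · simpa [Function.onFun, hjk.symm] using hdisj k
    rcases eq_or_ne k i with rfl | hk
    · simpa [Function.onFun, hj] using (hdisj j).symm
    · simpa [Function.onFun, hj, hk] using h.disjoint hjk
  subset := (Function.forall_update_iff B fun _ S ↦ S ⊆ R).2
    ⟨hT.trans Finset.sdiff_subset, fun j _ ↦ h.subset j⟩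
  card_le_one := (Function.forall_update_iff B fun _ S ↦ S.card ≤ 1).2
    ⟨hcard, fun j _ ↦ h.card_le_one j⟩

theorem sum_le_of_isMaxOn (h : IsPartialMatching R B)
    (hmax : IsMaxOn (welfare v) {B | IsPartialMatching R B} B) {T : Finset I}
    (hT : T ⊆ R \ Finset.univ.biUnion B) (hcard : T.card ≤ 1) (i : ι) :
    ∑ t ∈ T, v i t ≤ ∑ t ∈ B i, v i t := by
  classical
  by_contra! hlt
  have hle : welfare v (Function.update B i T) ≤ welfare v B := hmax (h.update hT hcard i)
  refine hle.not_gt (Finset.sum_lt_sum (fun j _ ↦ ?_) ⟨i, Finset.mem_univ i, by simpa using hlt⟩)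
  rcases eq_or_ne j i with rfl | hj
  · simpa using hlt.le
  · simp [hj]

end IsPartialMatching

variable [DecidableEq I]

/-- Envy-freeness up to one item: no agent envies another one after the removal of a suitable set
`T` of at most one item from the other's bundle. -/
def IsEF1 (v : ι → I → ℝ) (A : ι → Finset I) : Prop :=
  ∀ i j, ∃ T ⊆ A j, T.card ≤ 1 ∧ ∑ t ∈ A j \ T, v i t ≤ ∑ t ∈ A i, v i t

theorem IsEF1.of_const_mul {K : ι → ℝ} (hK : ∀ i, 0 < K i)
    (h : IsEF1 (fun i t ↦ K i * v i t) A) : IsEF1 v A := fun i j ↦ by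
  simpa only [← Finset.mul_sum, mul_le_mul_iff_right₀ (hK i)] using h i j

/-- The bundles of `A` partition the set `R` of items. -/
structure IsAllocation [Fintype ι] (R : Finset I) (A : ι → Finset I) : Prop where
  disjoint : Pairwise (Function.onFun Disjoint A)
  biUnion_eq : Finset.univ.biUnion A = R

theorem IsAllocation.subset [Fintype ι] (hA : IsAllocation R A) (i : ι) : A i ⊆ R :=
  (Finset.subset_biUnion_of_mem A (Finset.mem_univ i)).trans_eq hA.biUnion_eq

theorem IsAllocation.disjoint_of_sdiff [Fintype ι] (hA : IsAllocation (R \ Finset.univ.biUnion B) A)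
    (i j : ι) : Disjoint (B i) (A j) :=
  Finset.disjoint_sdiff.mono (Finset.subset_biUnion_of_mem B (Finset.mem_univ i)) (hA.subset j)

theorem welfare_union (v : ι → I → ℝ) [Fintype ι] (hAB : ∀ i, Disjoint (A i) (B i)) :
    welfare v (fun i ↦ A i ∪ B i) = welfare v A + welfare v B := by
  simp only [welfare, Finset.sum_union (hAB _), Finset.sum_add_distrib]

theorem IsEnvyFreeable.union [Fintype ι] (hA : IsEnvyFreeable v A) (hB : IsEnvyFreeable v B)
    (hAB : ∀ i, Disjoint (A i) (B i)) : IsEnvyFreeable v fun i ↦ A i ∪ B i := fun σ ↦ by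
  rw [welfare_union v hAB]
  exact (welfare_union v fun i ↦ hAB (σ i)).trans_le (add_le_add (hA σ) (hB σ))

theorem IsAllocation.union_of_sdiff [Fintype ι] (hB : Pairwise (Function.onFun Disjoint B))
    (hBR : ∀ i, B i ⊆ R) (hA : IsAllocation (R \ Finset.univ.biUnion B) A) :
    IsAllocation R fun i ↦ B i ∪ A i where
  disjoint i j hij := by
    simp only [Function.onFun, Finset.disjoint_union_left, Finset.disjoint_union_right]
    exact ⟨⟨hB hij, (hA.disjoint_of_sdiff j i).symm⟩, hA.disjoint_of_sdiff i j, hA.disjoint hij⟩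
  biUnion_eq := by
    have hunion : Finset.univ.biUnion (fun i ↦ B i ∪ A i) =
        Finset.univ.biUnion B ∪ Finset.univ.biUnion A := by
      ext; simp [exists_or]
    rw [hunion, hA.biUnion_eq,
      Finset.union_sdiff_of_subset (Finset.biUnion_subset.2 fun i _ ↦ hBR i)]

/- The item whose removal from `A j` ends the envy of `i` is left over by the matching `B`, so it is
worth at most `B i` to her; hence removing `B j` instead suffices for the union. -/
theorem IsPartialMatching.isEF1_union [Fintype ι] (hB : IsPartialMatching R B)
    (hmax : IsMaxOn (welfare v) {B | IsPartialMatching R B} B)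
    (hA : IsAllocation (R \ Finset.univ.biUnion B) A) (hEF1 : IsEF1 v A) :
    IsEF1 v fun i ↦ B i ∪ A i := fun i j ↦ by
  obtain ⟨T, hTA, hcard, hle⟩ := hEF1 i j
  refine ⟨B j, Finset.subset_union_left, hB.card_le_one j, ?_⟩
  have hT : ∑ t ∈ T, v i t ≤ ∑ t ∈ B i, v i t :=
    hB.sum_le_of_isMaxOn hmax (hTA.trans (hA.subset j)) hcard i
  rw [Finset.union_sdiff_cancel_left (hA.disjoint_of_sdiff j j),
    Finset.sum_union (hA.disjoint_of_sdiff i i), ← Finset.sum_sdiff hTA]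
  linarith

theorem exists_isAllocation [Fintype ι] [Nonempty ι] (R : Finset I) :
    ∃ A : ι → Finset I, IsAllocation R A := by
  classical
  obtain ⟨a⟩ := ‹Nonempty ι›
  exact ⟨fun i ↦ {_t ∈ R | i = a}, fun i j hij ↦ Finset.disjoint_filter.2 fun _ _ hi hj ↦
    hij (hi.trans hj.symm), by ext; simp [-Finset.filter_const]⟩

theorem IsAllocation.sum_eq_zero [Fintype ι] (hA : IsAllocation R A)
    (hv : ∀ i, ∀ t ∈ R, v i t = 0) (i j : ι) : ∑ t ∈ A j, v i t = 0 :=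
  Finset.sum_eq_zero fun _ ht ↦ hv i _ (hA.subset j ht)

theorem IsAllocation.isEF1_of_eq_zero [Fintype ι] (hA : IsAllocation R A)
    (hv : ∀ i, ∀ t ∈ R, v i t = 0) : IsEF1 v A := fun i j ↦
  ⟨∅, Finset.empty_subset _, by simp, by simp [hA.sum_eq_zero hv]⟩

theorem IsAllocation.isEnvyFreeable_of_eq_zero [Fintype ι] (hA : IsAllocation R A)
    (hv : ∀ i, ∀ t ∈ R, v i t = 0) : IsEnvyFreeable v A := fun σ ↦ by
  simp [welfare, hA.sum_eq_zero hv]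

theorem exists_isEF1_isEnvyFreeable [Fintype ι] [Nonempty ι] (hv : ∀ i t, 0 ≤ v i t)
    (R : Finset I) : ∃ A : ι → Finset I, IsAllocation R A ∧ IsEF1 v A ∧ IsEnvyFreeable v A := by
  induction R using Finset.strongInduction with
  | H R ih =>
    obtain ⟨B, hB, hmax⟩ := IsPartialMatching.exists_isMaxOn_welfare v R
    have hBR : Finset.univ.biUnion B ⊆ R := Finset.biUnion_subset.2 fun i _ ↦ hB.subset i
    rcases (Finset.univ.biUnion B).eq_empty_or_nonempty with hempty | hne
    · obtain ⟨A, hA⟩ := exists_isAllocation (ι := ι) R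
      have hzero (i : ι) (t : I) (ht : t ∈ R) : v i t = 0 := by
        have hBi : B i = ∅ :=
          Finset.subset_empty.1 (hempty ▸ Finset.subset_biUnion_of_mem B (Finset.mem_univ i))
        have hle := hB.sum_le_of_isMaxOn hmax (T := {t}) (by simpa [hempty] using ht) (by simp) i
        exact (by simpa [hBi] using hle : v i t ≤ 0).antisymm (hv i t)
      exact ⟨A, hA, hA.isEF1_of_eq_zero hzero, hA.isEnvyFreeable_of_eq_zero hzero⟩
    · obtain ⟨A, hA, hEF1, hfree⟩ := ih _ (Finset.sdiff_ssubset hBR hne)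
      exact ⟨fun i ↦ B i ∪ A i, hA.union_of_sdiff hB.disjoint hB.subset,
        hB.isEF1_union hmax hA hEF1,
        IsEnvyFreeable.union (fun σ ↦ hmax (hB.comp_perm σ)) hfree
          fun i ↦ hA.disjoint_of_sdiff i i⟩

end Items

section Subsidies

variable {ι I : Type*} [Fintype ι] {v : ι → I → ℝ} {A : ι → Finset I}

theorem IsEnvyFreeable.exists_subsidy (hA : IsEnvyFreeable v A) :
    ∃ q : ι → ℝ, ∀ i j, ∑ t ∈ A j, v i t + q j ≤ ∑ t ∈ A i, v i t + q i := by
  obtain ⟨q, hq⟩ := exists_potential_of_sum_perm_nonpos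
    (w := fun i j ↦ ∑ t ∈ A j, v i t - ∑ t ∈ A i, v i t) (by simp) fun σ ↦ by
      rw [Finset.sum_sub_distrib]
      exact sub_nonpos.2 (hA σ)
  exact ⟨q, fun i j ↦ by linarith [hq i j]⟩

theorem exists_sum_max_zero_sub_eq [Nonempty ι] (q : ι → ℝ) {c : ℝ} (hc : 0 ≤ c) :
    ∃ l, ∑ i, max 0 (q i - l) = c := by
  obtain ⟨k, hk⟩ := Finite.exists_max q
  have hcont : Continuous fun l : ℝ ↦ ∑ i, max 0 (q i - l) := by fun_prop
  refine mem_range_of_exists_le_of_exists_ge hcont ⟨q k, ?_⟩ ⟨q k - c, ?_⟩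
  · simpa [hk] using hc
  · calc c = q k - (q k - c) := by ring
      _ ≤ max 0 (q k - (q k - c)) := le_max_right _ _
      _ ≤ ∑ i, max 0 (q i - (q k - c)) :=
        Finset.single_le_sum (f := fun i ↦ max 0 (q i - (q k - c)))
          (fun _ _ ↦ le_max_left _ _) (Finset.mem_univ k)

/- Only the part of the subsidies above a water level `l` is paid; an agent who receives nothing may
then be envied for her items, but nobody who receives a positive amount is envied. -/
theorem IsEnvyFreeable.exists_subsidy_sum_eq [Nonempty ι] (hA : IsEnvyFreeable v A) {c : ℝ}
    (hc : 0 ≤ c) : ∃ p : ι → ℝ, (∀ i, 0 ≤ p i) ∧ ∑ i, p i = c ∧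
      ∀ i j, 0 < p j → ∑ t ∈ A j, v i t + p j ≤ ∑ t ∈ A i, v i t + p i := by
  obtain ⟨q, hq⟩ := hA.exists_subsidy
  obtain ⟨l, hl⟩ := exists_sum_max_zero_sub_eq q hc
  refine ⟨fun i ↦ max 0 (q i - l), fun i ↦ le_max_left _ _, hl, fun i j hj ↦ ?_⟩
  have hpj : max 0 (q j - l) = q j - l := max_eq_right_of_lt (by simpa using hj)
  dsimp only
  linarith [hq i j, le_max_right 0 (q i - l)]

open Filter in
/- If `c > 0`, one unit of money is exchanged for `c`; if `c = 0`, items are made so valuable that a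
unit of money cannot compensate for any positive difference `x b`. -/
theorem exists_exchange_rate {β : Type*} [Finite β] (x : β → ℝ) {c : ℝ} (hc : 0 ≤ c) :
    ∃ K > 0, ∀ b, ∀ p q : ℝ, 0 ≤ q → p ≤ 1 → K * x b + q ≤ p → x b + q * c ≤ p * c := by
  rcases hc.eq_or_lt with rfl | hc
  · have hlarge : ∀ᶠ K : ℝ in atTop, ∀ b, 0 < x b → 1 < K * x b := by
      refine eventually_all.2 fun b ↦ ?_
      rcases le_or_gt (x b) 0 with hb | hb
      · exact .of_forall fun K h ↦ absurd h hb.not_gt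
      · exact ((tendsto_id.atTop_mul_const hb).eventually_gt_atTop 1).mono fun K hK _ ↦ hK
    obtain ⟨K, hK, hpos⟩ := (hlarge.and (eventually_gt_atTop 0)).exists
    refine ⟨K, hpos, fun b p q hq hp h ↦ ?_⟩
    have hb : x b ≤ 0 := not_lt.1 fun hb ↦ by linarith [hK b hb]
    simpa using hb
  · refine ⟨c⁻¹, inv_pos.2 hc, fun b p q _ _ h ↦ ?_⟩
    calc x b + q * c = (c⁻¹ * x b + q) * c := by field_simp
      _ ≤ p * c := by gcongr

theorem exists_isEF1_subsidized [Nonempty ι] [Fintype I] [DecidableEq I] (hv : ∀ i t, 0 ≤ v i t)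
    {c : ι → ℝ} (hc : ∀ i, 0 ≤ c i) :
    ∃ (A : ι → Finset I) (p : ι → ℝ), IsAllocation Finset.univ A ∧ IsEF1 v A ∧
      (∀ i, 0 ≤ p i) ∧ ∑ i, p i = 1 ∧
      ∀ i j, 0 < p j → ∑ t ∈ A j, v i t + p j * c i ≤ ∑ t ∈ A i, v i t + p i * c i := by
  choose K hK hrate using fun i ↦ exists_exchange_rate
    (fun b : Finset I × Finset I ↦ ∑ t ∈ b.1, v i t - ∑ t ∈ b.2, v i t) (hc i)
  obtain ⟨A, hA, hEF1, hfree⟩ := exists_isEF1_isEnvyFreeable (v := fun i t ↦ K i * v i t)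
    (fun i t ↦ mul_nonneg (hK i).le (hv i t)) Finset.univ
  obtain ⟨p, hp, hsum, hpay⟩ := hfree.exists_subsidy_sum_eq zero_le_one
  refine ⟨A, p, hA, hEF1.of_const_mul hK, hp, hsum, fun i j hj ↦ ?_⟩
  have hp1 : p i ≤ 1 := hsum ▸ Finset.single_le_sum (fun k _ ↦ hp k) (Finset.mem_univ i)
  have hmoney := hpay i j hj
  simp only [← Finset.mul_sum] at hmoney
  linarith [hrate i (A j, A i) (p i) (p j) (hp j) hp1 (by linarith)]

end Subsidies

section EFM

open Set

variable {ι I α : Type*} [DecidableEq I] [MeasurableSpace α]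

/-- Envy-freeness for mixed goods: agent `i`, who values item `t` at `u i t` and cake by `μ i`, does
not envy `j`, unless her value of `j`'s cake is `0` and she does not envy `j` for the items alone
after the removal of some item. -/
def IsEFM (u : ι → I → ℝ) (μ : ι → Measure α) (A : ι → Finset I) (C : ι → Set α) : Prop :=
  ∀ i j, ∑ t ∈ A j, u i t + (μ i).real (C j) ≤ ∑ t ∈ A i, u i t + (μ i).real (C i) ∨
    (μ i).real (C j) = 0 ∧
      ∃ t ∈ A i ∪ A j, ∑ s ∈ (A j).erase t, u i s ≤ ∑ s ∈ (A i).erase t, u i s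

theorem IsEF1.exists_erase_of_lt {u : ι → I → ℝ} {A : ι → Finset I} (h : IsEF1 u A)
    {i j : ι} (hdisj : Disjoint (A i) (A j))
    (hlt : ∑ t ∈ A i, u i t < ∑ t ∈ A j, u i t) :
    ∃ t ∈ A j, ∑ s ∈ (A j).erase t, u i s ≤ ∑ s ∈ (A i).erase t, u i s := by
  obtain ⟨T, hTA, hcard, hle⟩ := h i j
  have hne : T ≠ ∅ := by
    rintro rfl
    exact hlt.not_ge (by simpa using hle)
  obtain ⟨t, rfl⟩ := Finset.card_eq_one.1
    (hcard.antisymm (Finset.card_pos.2 (Finset.nonempty_iff_ne_empty.2 hne)))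
  have htj : t ∈ A j := Finset.singleton_subset_iff.1 hTA
  refine ⟨t, htj, ?_⟩
  rwa [Finset.erase_eq_of_notMem (Finset.disjoint_right.1 hdisj htj),
    ← Finset.sdiff_singleton_eq_erase]

theorem IsEF1.isEFM {u : ι → I → ℝ} {μ : ι → Measure α} {A : ι → Finset I} {C : ι → Set α}
    {E : Set α} {p : ι → ℝ} (h : IsEF1 u A) (hA : Pairwise (Function.onFun Disjoint A))
    (hp : ∀ i, 0 ≤ p i) (hC : ∀ i j, (μ i).real (C j) = p j * (μ i).real E)
    (hpay : ∀ i j, 0 < p j →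
      ∑ t ∈ A j, u i t + p j * (μ i).real E ≤ ∑ t ∈ A i, u i t + p i * (μ i).real E) :
    IsEFM u μ A C := fun i j ↦ by
  rcases (hp j).eq_or_lt with hj | hj
  · have hCj : (μ i).real (C j) = 0 := by rw [hC, ← hj, zero_mul]
    rcases le_or_gt (∑ t ∈ A j, u i t) (∑ t ∈ A i, u i t) with hle | hlt
    · exact .inl (add_le_add hle (hCj.trans_le measureReal_nonneg))
    · have hij : i ≠ j := by rintro rfl; exact hlt.false
      obtain ⟨t, ht, herase⟩ := h.exists_erase_of_lt (hA hij) hlt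
      exact .inr ⟨hCj, t, Finset.mem_union_right _ ht, herase⟩
  · rw [hC, hC]
    exact .inl (hpay i j hj)

theorem efm_exists_goods_and_cake_general [Fintype ι] [Nonempty ι] [Fintype I]
    [StandardBorelSpace α] {u : ι → I → ℝ} (hu : ∀ i t, 0 ≤ u i t) (μ : ι → Measure α)
    [∀ i, IsFiniteMeasure (μ i)] [∀ i, NullSingletonClass (μ i)] {E : Set α}
    (hE : MeasurableSet E) :
    ∃ (A : ι → Finset I) (C : ι → Set α), IsAllocation Finset.univ A ∧
      (∀ i, MeasurableSet (C i)) ∧ Pairwise (Function.onFun Disjoint C) ∧ ⋃ i, C i = E ∧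
      IsEFM u μ A C := by
  obtain ⟨A, p, hA, hEF1, hp, hsum, hpay⟩ :=
    exists_isEF1_subsidized hu fun i ↦ measureReal_nonneg (μ := μ i) (s := E)
  obtain ⟨C, hmeas, hdisj, hunion, hreal⟩ := exists_proportional_partition μ hE hp hsum
  exact ⟨A, C, hA, hmeas, hdisj, hunion, hEF1.isEFM hA.disjoint hp hreal hpay⟩

theorem measureReal_withDensity_ofReal {m : Measure α} {f : α → ℝ} (hf : Integrable f m)
    (h0 : 0 ≤ f) {C : Set α} (hC : MeasurableSet C) :
    (m.withDensity fun x ↦ ENNReal.ofReal (f x)).real C = ∫ x in C, f x ∂m := by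
  rw [measureReal_def, withDensity_apply _ hC,
    integral_eq_lintegral_of_nonneg_ae (.of_forall h0) hf.integrableOn.aestronglyMeasurable]

end EFM

/-- With indivisible goods (every agent values every item
non-negatively) and cake utilities given by nonnegative integrable
densities on `[0,1]`, an EFM allocation always exists. -/
theorem efm_exists_goods_and_cake
    (n : ℕ) (hn : 0 < n) (I : Type) [Fintype I] [DecidableEq I]
    (u : Fin n → I → ℝ)
    (f : Fin n → ℝ → ℝ)
    (hf_nonneg : ∀ i x, 0 ≤ f i x)
    (hf_int : ∀ i, IntegrableOn (f i) (Set.Icc (0 : ℝ) 1))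
    (hgoods : ∀ (i : Fin n) (t : I), 0 ≤ u i t) :
    ∃ (A : Fin n → Finset I) (C : Fin n → Set ℝ),
      -- (A_1, …, A_n) is a partition of the items
      (∀ i j, i ≠ j → Disjoint (A i) (A j)) ∧
      (Finset.univ.biUnion A = Finset.univ) ∧
      -- (C_1, …, C_n) is a measurable partition of the cake [0,1]
      (∀ i, MeasurableSet (C i)) ∧
      (∀ i j, i ≠ j → Disjoint (C i) (C j)) ∧
      ((⋃ i, C i) = Set.Icc (0 : ℝ) 1) ∧
      -- EFM
      (∀ i j : Fin n,
        (∑ t ∈ A i, u i t) + (∫ x in C i, f i x) ≥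
            (∑ t ∈ A j, u i t) + (∫ x in C j, f i x) ∨
          ((∫ x in C j, f i x) = 0 ∧
            ∃ t ∈ A i ∪ A j,
              (∑ s ∈ (A i).erase t, u i s) ≥ ∑ s ∈ (A j).erase t, u i s)) := by
  have : Nonempty (Fin n) := ⟨⟨0, hn⟩⟩
  let μ (i : Fin n) : Measure ℝ :=
    (volume.restrict (Set.Icc 0 1)).withDensity fun x ↦ ENNReal.ofReal (f i x)
  have (i : Fin n) : IsFiniteMeasure (μ i) := isFiniteMeasure_withDensity_ofReal (hf_int i).2
  obtain ⟨A, C, hA, hmeas, hdisj, hunion, hEFM⟩ :=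
    efm_exists_goods_and_cake_general hgoods μ measurableSet_Icc
  have hμ (i j : Fin n) : (μ i).real (C j) = ∫ x in C j, f i x := by
    rw [measureReal_withDensity_ofReal (hf_int i) (hf_nonneg i) (hmeas j),
      Measure.restrict_restrict_of_subset (hunion ▸ Set.subset_iUnion C j)]
  refine ⟨A, C, fun i j h ↦ hA.disjoint h, hA.biUnion_eq, hmeas, fun i j h ↦ hdisj h, hunion,
    fun i j ↦ ?_⟩
  simpa only [hμ] using hEFM i j
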